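/- arXiv:2507.08721 — 2 statements merged into one kernel-verified Lean document; each statement's English description precedes it below -/
import Mathlib

section
/- Let Ω be a measurable space and let P₀, P₁, …, P_t be probability measures on Ω (t ≥ 1). Let z₀, z₁, …, z_t : Ω → ℝ be measurable loss functions satisfying 0 ≤ z_k ≤ M for some M > 0, let u₀, u₁, …, u_t : Ω → ℝ be measurable proxy functions, let λ₀, λ₁, …, λ_t ∈ ℝ and τ ∈ (0, M). Assume the inequality (1/t)·∑_{k=1}^{t} P_k({u_k > λ_k} ∩ {z_k ≤ τ}) ≤ P₀({u₀ > λ₀} ∩ {z₀ ≤ τ}) + (1/t)·∑_{k=1}^{t} P_k({u_k ≤ λ_k} ∩ {z_k > τ}) holds. Then the running test risk is lower bounded: (1/t)·∑_{k=1}^{t} ∫ z_k dP_k ≥ τ·( (1/t)·∑_{k=1}^{t} P_k({u_k > λ_k}) − P₀({u₀ > λ₀} ∩ {z₀ ≤ τ}) ). -/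
open MeasureTheory

/-- The Markov inequality for `{z > τ}`, with its probability expressed through the detection rate
of a proxy `u` corrected by its false negatives and false positives. -/
theorem mul_detection_add_falseNeg_sub_falsePos_le_integral
    {Ω : Type*} [MeasurableSpace Ω] {μ : Measure Ω} [IsFiniteMeasure μ]
    {z u : Ω → ℝ} (hz : Measurable z) (hu : Measurable u)
    (hz_nonneg : ∀ ω, 0 ≤ z ω) (hz_int : Integrable z μ) (l : ℝ) {τ : ℝ} (hτ : 0 ≤ τ) :
    τ * (μ.real {ω | u ω > l} + μ.real {ω | u ω ≤ l ∧ z ω > τ}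
      - μ.real {ω | u ω > l ∧ z ω ≤ τ}) ≤ ∫ ω, z ω ∂μ := by
  have hzs : MeasurableSet {ω | z ω > τ} := measurableSet_lt measurable_const hz
  have hus : MeasurableSet {ω | u ω > l} := measurableSet_lt measurable_const hu
  have split_proxy := measureReal_inter_add_sdiff (μ := μ) (s := {ω | u ω > l}) hzs
  have split_loss := measureReal_inter_add_sdiff (μ := μ) (s := {ω | z ω > τ}) hus
  have falsePos_eq : {ω | u ω > l} \ {ω | z ω > τ} = {ω | u ω > l ∧ z ω ≤ τ} := by
    ext ω; simp
  have falseNeg_eq : {ω | z ω > τ} \ {ω | u ω > l} = {ω | u ω ≤ l ∧ z ω > τ} := by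
    ext ω; simp [and_comm]
  rw [falsePos_eq] at split_proxy
  rw [falseNeg_eq, Set.inter_comm] at split_loss
  calc τ * (μ.real {ω | u ω > l} + μ.real {ω | u ω ≤ l ∧ z ω > τ}
        - μ.real {ω | u ω > l ∧ z ω ≤ τ})
      = τ * μ.real {ω | z ω > τ} := by congr 1; linarith
    _ ≤ τ * μ.real {ω | τ ≤ z ω} :=
        mul_le_mul_of_nonneg_left (measureReal_mono (Set.ofPred_subset_ofPred.2 fun _ h => h.le)) hτ
    _ ≤ ∫ ω, z ω ∂μ :=
        mul_meas_ge_le_integral_of_nonneg (Filter.Eventually.of_forall hz_nonneg) hz_int τ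

/-- Proposition 1: unsupervised lower bound on the running test risk. -/
theorem unsupervised_lower_bound
    {Ω : Type*} [MeasurableSpace Ω]
    (t : ℕ) (ht : 1 ≤ t)
    (P : ℕ → Measure Ω) (hP : ∀ k, IsProbabilityMeasure (P k))
    (z u : ℕ → Ω → ℝ)
    (hz : ∀ k, Measurable (z k)) (hu : ∀ k, Measurable (u k))
    (M : ℝ) (hM : 0 < M)
    (hzb : ∀ k, ∀ ω, 0 ≤ z k ω ∧ z k ω ≤ M)
    (lam : ℕ → ℝ) (τ : ℝ) (hτ : τ ∈ Set.Ioo 0 M)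
    (hA : (1 / (t : ℝ)) * ∑ k ∈ Finset.Icc 1 t,
        (P k {ω | u k ω > lam k ∧ z k ω ≤ τ}).toReal
      ≤ (P 0 {ω | u 0 ω > lam 0 ∧ z 0 ω ≤ τ}).toReal
        + (1 / (t : ℝ)) * ∑ k ∈ Finset.Icc 1 t,
          (P k {ω | u k ω ≤ lam k ∧ z k ω > τ}).toReal) :
    (1 / (t : ℝ)) * ∑ k ∈ Finset.Icc 1 t, ∫ ω, z k ω ∂(P k)
      ≥ τ * ((1 / (t : ℝ)) * ∑ k ∈ Finset.Icc 1 t, (P k {ω | u k ω > lam k}).toReal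
        - (P 0 {ω | u 0 ω > lam 0 ∧ z 0 ω ≤ τ}).toReal) := by
  have risk_ge : ∀ k ∈ Finset.Icc 1 t,
      τ * ((P k {ω | u k ω > lam k}).toReal + (P k {ω | u k ω ≤ lam k ∧ z k ω > τ}).toReal
        - (P k {ω | u k ω > lam k ∧ z k ω ≤ τ}).toReal) ≤ ∫ ω, z k ω ∂(P k) := by
    intro k _
    have := hP k
    have hz_int : Integrable (z k) (P k) :=
      Integrable.of_mem_Icc 0 M (hz k).aemeasurable (Filter.Eventually.of_forall (hzb k))
    exact mul_detection_add_falseNeg_sub_falsePos_le_integral (hz k) (hu k)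
      (fun ω => (hzb k ω).1) hz_int (lam k) hτ.1.le
  have avg_risk_ge := mul_le_mul_of_nonneg_left (Finset.sum_le_sum risk_ge)
    (by positivity : 0 ≤ 1 / (t : ℝ))
  rw [← Finset.mul_sum, Finset.sum_sub_distrib, Finset.sum_add_distrib] at avg_risk_ge
  have scaled_hA := mul_le_mul_of_nonneg_left hA hτ.1.le
  linarith
end

section
/- Let Ω be a measurable space and let P₀, P₁, …, P_t be probability measures on Ω (t ≥ 1). Let z₀, z₁, …, z_t : Ω → ℝ be measurable functions taking values in {0, 1}, let u₀, u₁, …, u_t : Ω → ℝ be measurable, and let λ₀, λ₁, …, λ_t ∈ ℝ. Assume (1/t)·∑_{k=1}^{t} P_k({u_k > λ_k} ∩ {z_k = 0}) ≤ P₀({u₀ > λ₀} ∩ {z₀ = 0}) + (1/t)·∑_{k=1}^{t} P_k({u_k ≤ λ_k} ∩ {z_k = 1}). Then (1/t)·∑_{k=1}^{t} ∫ z_k dP_k ≥ (1/t)·∑_{k=1}^{t} P_k({u_k > λ_k}) − P₀({u₀ > λ₀} ∩ {z₀ = 0}). -/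
open MeasureTheory

/-- The integral of a measurable `{0, 1}`-valued function is the measure of its level set at `1`. -/
theorem integral_eq_measureReal_eq_one {Ω : Type*} [MeasurableSpace Ω] (μ : Measure Ω)
    {z : Ω → ℝ} (hz : Measurable z) (hz01 : ∀ ω, z ω = 0 ∨ z ω = 1) :
    ∫ ω, z ω ∂μ = μ.real {ω | z ω = 1} := by
  have hind : z = {ω | z ω = 1}.indicator 1 := by
    ext ω
    rcases hz01 ω with h | h <;> simp [h]
  conv_lhs => rw [hind]
  exact integral_indicator_one (hz (measurableSet_singleton 1))

/-- The mean of a `{0, 1}`-valued function and the measure of `{lam < u}` differ by the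
difference of the two error masses. -/
theorem integral_add_measureReal_eq {Ω : Type*} [MeasurableSpace Ω] (μ : Measure Ω)
    [IsFiniteMeasure μ] {z u : Ω → ℝ} (hz : Measurable z) (hu : Measurable u)
    (hz01 : ∀ ω, z ω = 0 ∨ z ω = 1) (lam : ℝ) :
    ∫ ω, z ω ∂μ + μ.real {ω | u ω > lam ∧ z ω = 0}
      = μ.real {ω | u ω > lam} + μ.real {ω | u ω ≤ lam ∧ z ω = 1} := by
  have hone : MeasurableSet {ω | z ω = 1} := hz (measurableSet_singleton 1)
  have hgt : MeasurableSet {ω | u ω > lam} := measurableSet_lt measurable_const hu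
  have split_one := measureReal_inter_add_sdiff (μ := μ) (s := {ω | z ω = 1}) hgt
  have split_gt := measureReal_inter_add_sdiff (μ := μ) (s := {ω | u ω > lam}) hone
  have diff_one : {ω | z ω = 1} \ {ω | u ω > lam} = {ω | u ω ≤ lam ∧ z ω = 1} := by
    ext ω
    simp [and_comm]
  have diff_gt : {ω | u ω > lam} \ {ω | z ω = 1} = {ω | u ω > lam ∧ z ω = 0} := by
    ext ω
    rcases hz01 ω with h | h <;> simp [h]
  rw [diff_one] at split_one
  rw [diff_gt, Set.inter_comm] at split_gt
  rw [integral_eq_measureReal_eq_one μ hz hz01]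
  linarith

/-- Corollary A.4: tighter unsupervised lower bound for the 0-1 loss. -/
theorem zero_one_loss_lower_bound
    {Ω : Type*} [MeasurableSpace Ω]
    (t : ℕ) (ht : 1 ≤ t)
    (P : ℕ → Measure Ω) (hP : ∀ k, IsProbabilityMeasure (P k))
    (z u : ℕ → Ω → ℝ)
    (hz : ∀ k, Measurable (z k)) (hu : ∀ k, Measurable (u k))
    (hz01 : ∀ k, ∀ ω, z k ω = 0 ∨ z k ω = 1)
    (lam : ℕ → ℝ)
    (hA : (1 / (t : ℝ)) * ∑ k ∈ Finset.Icc 1 t,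
        (P k {ω | u k ω > lam k ∧ z k ω = 0}).toReal
      ≤ (P 0 {ω | u 0 ω > lam 0 ∧ z 0 ω = 0}).toReal
        + (1 / (t : ℝ)) * ∑ k ∈ Finset.Icc 1 t,
          (P k {ω | u k ω ≤ lam k ∧ z k ω = 1}).toReal) :
    (1 / (t : ℝ)) * ∑ k ∈ Finset.Icc 1 t, ∫ ω, z k ω ∂(P k)
      ≥ (1 / (t : ℝ)) * ∑ k ∈ Finset.Icc 1 t, (P k {ω | u k ω > lam k}).toReal
        - (P 0 {ω | u 0 ω > lam 0 ∧ z 0 ω = 0}).toReal := by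
  have hsum : ∑ k ∈ Finset.Icc 1 t, ∫ ω, z k ω ∂(P k)
        + ∑ k ∈ Finset.Icc 1 t, (P k {ω | u k ω > lam k ∧ z k ω = 0}).toReal
      = ∑ k ∈ Finset.Icc 1 t, (P k {ω | u k ω > lam k}).toReal
        + ∑ k ∈ Finset.Icc 1 t, (P k {ω | u k ω ≤ lam k ∧ z k ω = 1}).toReal := by
    rw [← Finset.sum_add_distrib, ← Finset.sum_add_distrib]
    exact Finset.sum_congr rfl fun k _ ↦
      integral_add_measureReal_eq (P k) (hz k) (hu k) (hz01 k) (lam k)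
  have hmean := congrArg (fun x ↦ 1 / (t : ℝ) * x) hsum
  simp only [mul_add] at hmean
  linarith
end
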